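/- For every ε ∈ (0,1/2) there is a constant C = C(ε) ≥ 1 such that the following holds. Let p ∈ (0,1/2], K ≥ 1, and let f : {0,1}^n → {0,1} be a monotone Boolean function with ε ≤ μ_p(f) ≤ 1 − ε and I[f] ≤ K/p. Then there is a set J ⊆ [n] with |J| ≤ C·K such that μ_p(f_{J→1}) ≥ μ_p(f) + e^{−C·K}. -/

import Mathlib

open Finset

namespace GlobalHC

variable {n : ℕ}

/-- Expectation with respect to the `p`-biased measure on `{0,1}^n`. -/
noncomputable def Ep (p : ℝ) (f : (Fin n → Bool) → ℝ) : ℝ :=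
  ∑ x : Fin n → Bool, (∏ i, if x i then p else 1 - p) * f x

/-- The `r`-norm with respect to the `p`-biased measure. -/
noncomputable def pnorm (p r : ℝ) (f : (Fin n → Bool) → ℝ) : ℝ :=
  (Ep p fun x => |f x| ^ r) ^ (1 / r)

/-- The `p`-biased character `χ_S`. -/
noncomputable def chi (p : ℝ) (S : Finset (Fin n)) (x : Fin n → Bool) : ℝ :=
  ∏ i ∈ S, ((if x i then (1 : ℝ) else 0) - p) / Real.sqrt (p * (1 - p))

/-- The `p`-biased Fourier coefficient `f̂(S)`. -/
noncomputable def coeff (p : ℝ) (f : (Fin n → Bool) → ℝ) (S : Finset (Fin n)) : ℝ :=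
  Ep p fun x => f x * chi p S x

/-- The derivative `D_S f = Σ_{T ⊇ S} f̂(T) χ_{T∖S}`. -/
noncomputable def derivS (p : ℝ) (S : Finset (Fin n)) (f : (Fin n → Bool) → ℝ) :
    (Fin n → Bool) → ℝ :=
  fun x => ∑ T ∈ Finset.univ.filter (fun T => S ⊆ T), coeff p f T * chi p (T \ S) x

/-- The generalised influence `I_S(f) = σ^{-2|S|} Σ_{T ⊇ S} f̂(T)²`. -/
noncomputable def genInf (p : ℝ) (S : Finset (Fin n)) (f : (Fin n → Bool) → ℝ) : ℝ :=
  (∑ T ∈ Finset.univ.filter (fun T => S ⊆ T), coeff p f T ^ 2) / (p * (1 - p)) ^ S.card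

/-- The noise operator `T_ρ f = Σ_S ρ^{|S|} f̂(S) χ_S`. -/
noncomputable def noise (p ρ : ℝ) (f : (Fin n → Bool) → ℝ) : (Fin n → Bool) → ℝ :=
  fun x => ∑ S : Finset (Fin n), ρ ^ S.card * coeff p f S * chi p S x

/-- The degree-`r` truncation `f^{≤ r}`. -/
noncomputable def trunc (p : ℝ) (r : ℕ) (f : (Fin n → Bool) → ℝ) : (Fin n → Bool) → ℝ :=
  fun x => ∑ S ∈ Finset.univ.filter (fun S : Finset (Fin n) => S.card ≤ r),
    coeff p f S * chi p S x

/-- The restriction `f_{J→1}` setting all coordinates in `J` to `1`. -/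
def restrict1 (J : Finset (Fin n)) (f : (Fin n → Bool) → ℝ) : (Fin n → Bool) → ℝ :=
  fun x => f (fun i => if i ∈ J then true else x i)

/-- `f` is `(r,δ)`-global (for the `p`-biased measure). -/
def IsGlobal (p r δ : ℝ) (f : (Fin n → Bool) → ℝ) : Prop :=
  ∀ J : Finset (Fin n), (J.card : ℝ) ≤ r → Ep p (restrict1 J f) ≤ Ep p f + δ

/-- The total influence `I[f] = Σ_i Pr_{μ_p}[f(x ⊕ e_i) ≠ f(x)]`. -/
noncomputable def totalInf (p : ℝ) (f : (Fin n → Bool) → ℝ) : ℝ :=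
  ∑ i : Fin n, Ep p fun x => if f (Function.update x i (!x i)) = f x then 0 else 1

/-- Noise stability `Stab_ρ(f) = Σ_S ρ^{|S|} f̂(S)²` (w.r.t. `μ_p`). -/
noncomputable def stab (p ρ : ℝ) (f : (Fin n → Bool) → ℝ) : ℝ :=
  ∑ S : Finset (Fin n), ρ ^ S.card * coeff p f S ^ 2

/-- `f` is monotone. -/
def Mono (f : (Fin n → Bool) → ℝ) : Prop :=
  ∀ x y : Fin n → Bool, (∀ i, x i ≤ y i) → f x ≤ f y

/-!
Suppose that no restriction `f_{J→1}` with few fixed coordinates raises the mean by `exp (-C * K)`,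
so that `f` is global. By monotonicity the derivative of `f` in direction `i` lies below the jump
`f_{J→1} - f_{J→0}` for every `J ∋ i`, and this jump does not depend on the coordinates in `J` and
has tiny mean. Hence all generalised influences of the derivatives up to order `d` are tiny, and
hypercontractivity for functions with small generalised influences shows that a derivative has only
a fraction `η` of its Fourier weight on the levels up to `d`. Since the weight of `f` at `T` is seen
by the derivatives in the `|T|` directions `i ∈ T`, summing over `i` bounds the weight of `f` on the
levels `1, …, d + 1` by `η * (p * (1 - p) * I[f])`, while the higher levels carry at most
`p * (1 - p) * I[f] / (d + 2)`. For `d` of order `K / ε` both are too small for a function of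
variance at least `ε / 2`.
-/

open Function (update)

/-- The discrete derivative `f_{i→1} - f_{i→0}`. It is `(p(1-p))^{-1/2}` times `derivS p {i} f`, a
normalisation that keeps square roots out of the estimates. -/
def coordDeriv (i : Fin n) (f : (Fin n → Bool) → ℝ) : (Fin n → Bool) → ℝ :=
  fun x => f (update x i true) - f (update x i false)

/-- The average of `f` over the `p`-biased coordinate `i`, the other coordinates being fixed. -/
def coordAvg (p : ℝ) (i : Fin n) (f : (Fin n → Bool) → ℝ) : (Fin n → Bool) → ℝ :=
  fun x => p * f (update x i true) + (1 - p) * f (update x i false)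

/-- The restriction `f_{J→0}` setting all coordinates in `J` to `0`. -/
def restrict0 (J : Finset (Fin n)) (f : (Fin n → Bool) → ℝ) : (Fin n → Bool) → ℝ :=
  fun x => f (fun i => if i ∈ J then false else x i)

/-- The Fourier weight `W^{≤ d}[f] = Σ_{|T| ≤ d} f̂(T)²` of `f` on the levels up to `d`. -/
noncomputable def levelWeight (p : ℝ) (d : ℕ) (f : (Fin n → Bool) → ℝ) : ℝ :=
  ∑ T : Finset (Fin n) with T.card ≤ d, coeff p f T ^ 2

variable {p : ℝ} {i : Fin n} {S T V : Finset (Fin n)} {f g : (Fin n → Bool) → ℝ}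

/-! ### Expectations -/

theorem Ep_add (p : ℝ) (f g : (Fin n → Bool) → ℝ) :
    Ep p (fun x => f x + g x) = Ep p f + Ep p g := by
  simp only [Ep, mul_add, sum_add_distrib]

theorem Ep_sub (p : ℝ) (f g : (Fin n → Bool) → ℝ) :
    Ep p (fun x => f x - g x) = Ep p f - Ep p g := by
  simp only [Ep, mul_sub, sum_sub_distrib]

theorem Ep_const_mul (p c : ℝ) (f : (Fin n → Bool) → ℝ) :
    Ep p (fun x => c * f x) = c * Ep p f := by
  simp only [Ep, mul_sum, mul_left_comm]

theorem Ep_sum {α : Type*} (p : ℝ) (s : Finset α) (f : α → (Fin n → Bool) → ℝ) :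
    Ep p (fun x => ∑ a ∈ s, f a x) = ∑ a ∈ s, Ep p (f a) := by
  simp only [Ep, mul_sum]
  exact sum_comm

theorem Ep_const (p c : ℝ) : Ep p (fun _ : Fin n → Bool => c) = c := by
  have htotal := prod_univ_sum (fun _ : Fin n => (univ : Finset Bool))
    (fun _ b => if b then p else 1 - p)
  simp only [Fintype.piFinset_univ, Fintype.sum_bool, if_true, Bool.false_eq_true, if_false,
    add_sub_cancel, prod_const_one] at htotal
  rw [Ep, ← sum_mul, ← htotal, one_mul]

theorem weight_nonneg (hp0 : 0 ≤ p) (hp1 : p ≤ 1) (x : Fin n → Bool) :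
    0 ≤ ∏ i, (if x i then p else 1 - p) :=
  prod_nonneg fun i _ => by split_ifs <;> linarith

theorem Ep_mono (hp0 : 0 ≤ p) (hp1 : p ≤ 1) (h : ∀ x, f x ≤ g x) : Ep p f ≤ Ep p g :=
  sum_le_sum fun x _ => mul_le_mul_of_nonneg_left (h x) (weight_nonneg hp0 hp1 x)

theorem Ep_nonneg (hp0 : 0 ≤ p) (hp1 : p ≤ 1) (h : ∀ x, 0 ≤ f x) : 0 ≤ Ep p f :=
  sum_nonneg fun x _ => mul_nonneg (weight_nonneg hp0 hp1 x) (h x)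

theorem Ep_mul_sq_le (hp0 : 0 ≤ p) (hp1 : p ≤ 1) (f g : (Fin n → Bool) → ℝ) :
    (Ep p fun x => f x * g x) ^ 2 ≤ (Ep p fun x => f x ^ 2) * (Ep p fun x => g x ^ 2) :=
  sum_sq_le_sum_mul_sum_of_sq_le_mul _
    (fun x _ => mul_nonneg (weight_nonneg hp0 hp1 x) (sq_nonneg _))
    (fun x _ => mul_nonneg (weight_nonneg hp0 hp1 x) (sq_nonneg _)) fun x _ => le_of_eq (by ring)

theorem two_mul_sum_eq_sum_update (i : Fin n) (F : (Fin n → Bool) → ℝ) :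
    2 * ∑ x, F x = ∑ x, (F (update x i true) + F (update x i false)) := by
  have flip_involutive : Function.Involutive fun x : Fin n → Bool => update x i (!x i) :=
    fun x => by simp
  calc 2 * ∑ x, F x = ∑ x, (F x + F (update x i (!x i))) := by
        rw [sum_add_distrib, two_mul]
        exact congrArg _ (Equiv.sum_comp flip_involutive.toPerm F).symm
    _ = _ := sum_congr rfl fun x _ => by
        have hx : update x i (x i) = x := Function.update_eq_self i x
        cases hxi : x i <;> rw [hxi] at hx <;> simp [hx, add_comm]

theorem weight_update (p : ℝ) (x : Fin n → Bool) (i : Fin n) (b : Bool) :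
    ∏ j, (if update x i b j then p else 1 - p) =
      (if b then p else 1 - p) * ∏ j ∈ univ.erase i, (if x j then p else 1 - p) := by
  rw [← mul_prod_erase _ _ (mem_univ i), Function.update_self]
  refine congrArg _ (prod_congr rfl fun j hj => ?_)
  rw [Function.update_of_ne (ne_of_mem_erase hj)]

theorem Ep_coordAvg (p : ℝ) (i : Fin n) (f : (Fin n → Bool) → ℝ) :
    Ep p (coordAvg p i f) = Ep p f := by
  suffices 2 * Ep p (coordAvg p i f) = 2 * Ep p f by linarith
  simp only [Ep, two_mul_sum_eq_sum_update i, weight_update, coordAvg, Function.update_idem]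
  refine sum_congr rfl fun x _ => ?_
  simp only [if_true, Bool.false_eq_true, if_false]
  ring

/-! ### Coordinate operators and restrictions -/

theorem coordDeriv_eq_zero_of_dependsOn {s : Set (Fin n)} (hf : DependsOn f s) (hi : i ∉ s) :
    coordDeriv i f = 0 := by
  funext x
  refine sub_eq_zero.mpr (hf fun j hj => ?_)
  have hji : j ≠ i := fun h => hi (h ▸ hj)
  rw [Function.update_of_ne hji, Function.update_of_ne hji]

theorem dependsOn_comp_update (hf : DependsOn f (insert i V : Finset (Fin n))) (b : Bool) :
    DependsOn (fun x => f (update x i b)) V :=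
  (hf.update i b).mono (coe_subset.mpr (erase_insert_subset i V))

theorem dependsOn_coordDeriv (hf : DependsOn f (insert i V : Finset (Fin n))) :
    DependsOn (coordDeriv i f) V := fun _ _ hxy =>
  congrArg₂ (· - ·) (dependsOn_comp_update hf true hxy) (dependsOn_comp_update hf false hxy)

theorem dependsOn_coordAvg (hf : DependsOn f (insert i V : Finset (Fin n))) :
    DependsOn (coordAvg p i f) V := fun _ _ hxy =>
  congrArg₂ (fun a b => p * a + (1 - p) * b) (dependsOn_comp_update hf true hxy)
    (dependsOn_comp_update hf false hxy)

theorem coordDeriv_coordDeriv (i : Fin n) (f : (Fin n → Bool) → ℝ) :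
    coordDeriv i (coordDeriv i f) = 0 := by
  funext x
  simp only [coordDeriv, Function.update_idem, sub_self, Pi.zero_apply]

theorem coordDeriv_coordAvg (p : ℝ) (i : Fin n) (f : (Fin n → Bool) → ℝ) :
    coordDeriv i (coordAvg p i f) = 0 := by
  funext x
  simp only [coordDeriv, coordAvg, Function.update_idem, sub_self, Pi.zero_apply]

theorem dependsOn_restrict1 (S : Finset (Fin n)) (f : (Fin n → Bool) → ℝ) :
    DependsOn (restrict1 S f) (S : Set (Fin n))ᶜ := fun x y hxy => congrArg f <| funext fun j => by
  by_cases hj : j ∈ S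
  · simp only [if_pos hj]
  · simp only [if_neg hj, hxy j hj]

theorem dependsOn_restrict0 (S : Finset (Fin n)) (f : (Fin n → Bool) → ℝ) :
    DependsOn (restrict0 S f) (S : Set (Fin n))ᶜ := fun x y hxy => congrArg f <| funext fun j => by
  by_cases hj : j ∈ S
  · simp only [if_pos hj]
  · simp only [if_neg hj, hxy j hj]

theorem restrict0_insert (i : Fin n) (S : Finset (Fin n)) (f : (Fin n → Bool) → ℝ) :
    restrict0 (insert i S) f = restrict0 S fun x => f (update x i false) := by
  refine funext fun x => congrArg f <| funext fun j => ?_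
  rcases eq_or_ne j i with rfl | hji
  · simp only [mem_insert_self, if_true, Function.update_self]
  · simp only [mem_insert, hji, false_or, ne_eq, not_false_eq_true, Function.update_of_ne]

theorem restrict0_restrict1 (S : Finset (Fin n)) (f : (Fin n → Bool) → ℝ) :
    restrict0 S (restrict1 S f) = restrict1 S f :=
  funext fun _ => dependsOn_restrict1 S f fun _ hj => if_neg hj

theorem le_restrict1 (hf : Mono f) (S : Finset (Fin n)) (x : Fin n → Bool) :
    f x ≤ restrict1 S f x :=
  hf _ _ fun j => by split_ifs <;> simp [Bool.le_true]

theorem restrict0_le (hf : Mono f) (S : Finset (Fin n)) (x : Fin n → Bool) :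
    restrict0 S f x ≤ f x :=
  hf _ _ fun j => by split_ifs <;> simp [Bool.false_le]

theorem coordDeriv_nonneg (hf : Mono f) (i : Fin n) (x : Fin n → Bool) : 0 ≤ coordDeriv i f x :=
  sub_nonneg.mpr <| hf _ _ <| Function.update_mono (Bool.false_le _)

theorem coordDeriv_le_restrict1_sub_restrict0 (hf : Mono f) (hi : i ∈ S) (x : Fin n → Bool) :
    coordDeriv i f x ≤ restrict1 S f x - restrict0 S f x := by
  have hx (b : Bool) (j : Fin n) (hj : j ∈ (S : Set (Fin n))ᶜ) : x j = update x i b j :=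
    (Function.update_of_ne (ne_of_mem_of_not_mem hi hj).symm _ _).symm
  rw [dependsOn_restrict1 S f (hx true), dependsOn_restrict0 S f (hx false)]
  exact sub_le_sub (le_restrict1 hf S _) (restrict0_le hf S _)

theorem eq_zero_or_one_of_sub_nonneg {a b : ℝ} (ha : a = 0 ∨ a = 1) (hb : b = 0 ∨ b = 1)
    (hab : 0 ≤ a - b) : a - b = 0 ∨ a - b = 1 := by
  rcases ha with rfl | rfl <;> rcases hb with rfl | rfl <;> simp_all
  linarith

/-! ### Characters and Fourier coefficients -/

theorem sqrt_variance_pos (hp0 : 0 < p) (hp1 : p < 1) : 0 < √(p * (1 - p)) :=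
  Real.sqrt_pos.mpr (mul_pos hp0 (sub_pos.mpr hp1))

theorem sq_sqrt_variance (hp0 : 0 ≤ p) (hp1 : p ≤ 1) : √(p * (1 - p)) ^ 2 = p * (1 - p) :=
  Real.sq_sqrt (mul_nonneg hp0 (sub_nonneg.mpr hp1))

theorem chi_insert (p : ℝ) (hi : i ∉ T) (x : Fin n → Bool) :
    chi p (insert i T) x = ((if x i then (1 : ℝ) else 0) - p) / √(p * (1 - p)) * chi p T x :=
  prod_insert hi

theorem chi_update (p : ℝ) (hi : i ∉ T) (x : Fin n → Bool) (b : Bool) :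
    chi p T (update x i b) = chi p T x :=
  prod_congr rfl fun j hj => by rw [Function.update_of_ne (ne_of_mem_of_not_mem hj hi)]

theorem dependsOn_chi (p : ℝ) (T : Finset (Fin n)) : DependsOn (chi p T) (T : Set (Fin n)) :=
  fun _ _ hxy => prod_congr rfl fun j hj => by rw [hxy j hj]

theorem coordDeriv_chi_insert (p : ℝ) (hi : i ∉ T) (x : Fin n → Bool) :
    coordDeriv i (chi p (insert i T)) x = (√(p * (1 - p)))⁻¹ * chi p T x := by
  simp only [coordDeriv, chi_insert p hi, chi_update p hi, Function.update_self, if_true,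
    Bool.false_eq_true, if_false]
  ring

theorem coeff_empty (p : ℝ) (f : (Fin n → Bool) → ℝ) : coeff p f ∅ = Ep p f := by
  simp only [coeff, chi, prod_empty, mul_one]

theorem coeff_insert (hp0 : 0 < p) (hp1 : p < 1) (hi : i ∉ T) (f : (Fin n → Bool) → ℝ) :
    coeff p f (insert i T) = √(p * (1 - p)) * coeff p (coordDeriv i f) T := by
  have hσ := (sqrt_variance_pos hp0 hp1).ne'
  have hσ2 := sq_sqrt_variance hp0.le hp1.le
  rw [coeff, coeff, ← Ep_coordAvg p i, ← Ep_const_mul]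
  refine congrArg _ (funext fun x => ?_)
  simp only [coordAvg, coordDeriv, chi_insert p hi, chi_update p hi, Function.update_self, if_true,
    Bool.false_eq_true, if_false]
  field_simp
  rw [hσ2]
  ring

theorem coeff_coordAvg (p : ℝ) (hi : i ∉ T) (f : (Fin n → Bool) → ℝ) :
    coeff p (coordAvg p i f) T = coeff p f T := by
  rw [coeff, coeff, ← Ep_coordAvg p i fun x => f x * chi p T x]
  refine congrArg _ (funext fun x => ?_)
  simp only [coordAvg, chi_update p hi]
  ring

theorem coeff_eq_zero_of_coordDeriv_eq_zero (hp0 : 0 < p) (hp1 : p < 1)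
    (hf : coordDeriv i f = 0) (hi : i ∈ T) : coeff p f T = 0 := by
  rw [← insert_erase hi, coeff_insert hp0 hp1 (notMem_erase i T), hf]
  simp only [coeff, Pi.zero_apply, zero_mul, Ep_const, mul_zero]

theorem coeff_chi_self (hp0 : 0 < p) (hp1 : p < 1) (T : Finset (Fin n)) :
    coeff p (chi p T) T = 1 := by
  induction T using Finset.induction_on with
  | empty => rw [coeff_empty, show chi p ∅ = fun _ => 1 from funext fun _ => prod_empty, Ep_const]
  | insert i T hi ih =>
    rw [coeff_insert hp0 hp1 hi, funext (coordDeriv_chi_insert p hi)]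
    simp only [coeff, mul_assoc, Ep_const_mul] at ih ⊢
    rw [ih, mul_one, mul_inv_cancel₀ (sqrt_variance_pos hp0 hp1).ne']

theorem coeff_chi_of_ne (hp0 : 0 < p) (hp1 : p < 1) (hST : S ≠ T) : coeff p (chi p T) S = 0 := by
  have zero_of_mem {S T : Finset (Fin n)} {i : Fin n} (hS : i ∈ S) (hT : i ∉ T) :
      coeff p (chi p T) S = 0 :=
    coeff_eq_zero_of_coordDeriv_eq_zero hp0 hp1
      (coordDeriv_eq_zero_of_dependsOn (dependsOn_chi p T) hT) hS
  obtain ⟨i, hi⟩ := symmDiff_nonempty.mpr hST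
  rcases mem_symmDiff.mp hi with ⟨hS, hT⟩ | ⟨hT, hS⟩
  · exact zero_of_mem hS hT
  · rw [← zero_of_mem hT hS]
    simp only [coeff, mul_comm]

theorem coeff_sum_mul_chi (hp0 : 0 < p) (hp1 : p < 1) (c : Finset (Fin n) → ℝ)
    (S : Finset (Fin n)) :
    coeff p (fun x => ∑ T, c T * chi p T x) S = c S := by
  calc coeff p (fun x => ∑ T, c T * chi p T x) S = ∑ T, c T * coeff p (chi p T) S := by
        simp only [coeff, sum_mul, mul_assoc, Ep_sum, Ep_const_mul]
    _ = c S * coeff p (chi p S) S :=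
        sum_eq_single S (fun T _ hT => by rw [coeff_chi_of_ne hp0 hp1 hT.symm, mul_zero])
          fun h => absurd (mem_univ S) h
    _ = c S := by rw [coeff_chi_self hp0 hp1, mul_one]

theorem sum_finset_eq_sum_erase (i : Fin n) (F : Finset (Fin n) → ℝ) :
    ∑ T, F T = ∑ T ∈ (univ.erase i).powerset, (F T + F (insert i T)) := by
  rw [← powerset_univ, ← insert_erase (mem_univ i), sum_powerset_insert (notMem_erase i _),
    sum_add_distrib, insert_erase (mem_univ i)]

theorem notMem_of_mem_powerset_erase (hT : T ∈ (univ.erase i).powerset) : i ∉ T :=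
  fun h => notMem_erase i univ (mem_powerset.mp hT h)

/-! ### The noise operator and generalised influences -/

theorem noise_update (hp0 : 0 < p) (hp1 : p < 1) (ρ : ℝ) (i : Fin n) (f : (Fin n → Bool) → ℝ)
    (x : Fin n → Bool) (b : Bool) :
    noise p ρ f (update x i b) = noise p ρ (coordAvg p i f) x +
      ρ * ((if b then 1 else 0) - p) * noise p ρ (coordDeriv i f) x := by
  have hσ := (sqrt_variance_pos hp0 hp1).ne'
  simp only [noise, sum_finset_eq_sum_erase i, mul_sum]
  rw [← sum_add_distrib]
  refine sum_congr rfl fun T hT => ?_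
  have hi := notMem_of_mem_powerset_erase hT
  rw [coeff_eq_zero_of_coordDeriv_eq_zero hp0 hp1 (coordDeriv_coordAvg p i f) (mem_insert_self i T),
    coeff_eq_zero_of_coordDeriv_eq_zero hp0 hp1 (coordDeriv_coordDeriv i f) (mem_insert_self i T),
    coeff_coordAvg p hi, coeff_insert hp0 hp1 hi, chi_insert p hi, chi_update p hi,
    card_insert_of_notMem hi, Function.update_self]
  field_simp
  ring

theorem noise_const (hp0 : 0 < p) (hp1 : p < 1) (ρ c : ℝ) (x : Fin n → Bool) :
    noise p ρ (fun _ => c) x = c := by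
  have hcoeff {T : Finset (Fin n)} (hT : T ≠ ∅) : coeff p (fun _ : Fin n → Bool => c) T = 0 := by
    obtain ⟨i, hi⟩ := nonempty_iff_ne_empty.mpr hT
    exact coeff_eq_zero_of_coordDeriv_eq_zero hp0 hp1 (funext fun _ => sub_self c) hi
  rw [noise, sum_eq_single ∅ (fun T _ hT => by rw [hcoeff hT]; ring)
    fun h => absurd (mem_univ _) h, coeff_empty, Ep_const]
  simp only [card_empty, pow_zero, chi, prod_empty, one_mul, mul_one]

theorem noise_one_of_dependsOn (hp0 : 0 < p) (hp1 : p < 1) (hf : DependsOn f (V : Set (Fin n))) :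
    noise p 1 f = f := by
  induction V using Finset.induction_on generalizing f with
  | empty =>
    funext x
    rw [coe_empty] at hf
    rw [show f = fun _ => f x from funext fun y => hf.empty y x, noise_const hp0 hp1]
  | insert i V _ ih =>
    funext x
    have hx := noise_update hp0 hp1 1 i f x (x i)
    rw [Function.update_eq_self, ih (dependsOn_coordAvg hf), ih (dependsOn_coordDeriv hf)] at hx
    have hxi := Function.update_eq_self i x
    rw [hx]
    cases h : x i <;> rw [h] at hxi <;> simp only [coordAvg, coordDeriv, hxi, if_true,
      Bool.false_eq_true, if_false] <;> ring

theorem sum_coeff_mul_chi (hp0 : 0 < p) (hp1 : p < 1) (f : (Fin n → Bool) → ℝ)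
    (x : Fin n → Bool) : ∑ T, coeff p f T * chi p T x = f x := by
  have hf : DependsOn f ((univ : Finset (Fin n)) : Set (Fin n)) := by
    rw [coe_univ]
    exact dependsOn_univ f
  simpa only [noise, one_pow, one_mul] using congrFun (noise_one_of_dependsOn hp0 hp1 hf) x

theorem Ep_mul_sum_coeff_mul_chi (p : ℝ) (f : (Fin n → Bool) → ℝ)
    (s : Finset (Finset (Fin n))) :
    Ep p (fun x => f x * ∑ T ∈ s, coeff p f T * chi p T x) = ∑ T ∈ s, coeff p f T ^ 2 := by
  simp only [mul_sum, mul_left_comm (f _), Ep_sum, Ep_const_mul]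
  exact sum_congr rfl fun T _ => (sq _).symm

theorem Ep_sq (hp0 : 0 < p) (hp1 : p < 1) (f : (Fin n → Bool) → ℝ) :
    Ep p (fun x => f x ^ 2) = ∑ T, coeff p f T ^ 2 := by
  rw [← Ep_mul_sum_coeff_mul_chi]
  simp only [sum_coeff_mul_chi hp0 hp1, sq]

theorem genInf_empty (hp0 : 0 < p) (hp1 : p < 1) (f : (Fin n → Bool) → ℝ) :
    genInf p ∅ f = Ep p fun x => f x ^ 2 := by
  simp only [genInf, empty_subset, filter_true, card_empty, pow_zero, div_one, Ep_sq hp0 hp1]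

theorem genInf_nonneg (hp0 : 0 ≤ p) (hp1 : p ≤ 1) (S : Finset (Fin n)) (f : (Fin n → Bool) → ℝ) :
    0 ≤ genInf p S f :=
  div_nonneg (sum_nonneg fun _ _ => sq_nonneg _)
    (pow_nonneg (mul_nonneg hp0 (sub_nonneg.mpr hp1)) _)

theorem genInf_insert (hp0 : 0 < p) (hp1 : p < 1) (hi : i ∉ S) (f : (Fin n → Bool) → ℝ) :
    genInf p (insert i S) f = genInf p S (coordDeriv i f) := by
  have hq : p * (1 - p) ≠ 0 := (mul_pos hp0 (sub_pos.mpr hp1)).ne'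
  rw [genInf, genInf, card_insert_of_notMem hi, pow_succ', ← div_div, div_left_inj' (by positivity),
    div_eq_iff hq]
  simp only [sum_filter, sum_finset_eq_sum_erase i, sum_mul]
  refine sum_congr rfl fun T hT => ?_
  have hiT := notMem_of_mem_powerset_erase hT
  have hsub : ¬insert i S ⊆ T := fun h => hiT (h (mem_insert_self i S))
  simp only [if_neg hsub, insert_subset_insert_iff hi]
  rw [coeff_insert hp0 hp1 hiT,
    coeff_eq_zero_of_coordDeriv_eq_zero hp0 hp1 (coordDeriv_coordDeriv i f) (mem_insert_self i T),
    mul_pow, sq_sqrt_variance hp0.le hp1.le]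
  split_ifs <;> ring

theorem genInf_eq_coordAvg_add_coordDeriv (hp0 : 0 < p) (hp1 : p < 1) (hi : i ∉ S)
    (f : (Fin n → Bool) → ℝ) :
    genInf p S f =
      genInf p S (coordAvg p i f) + p * (1 - p) * genInf p S (coordDeriv i f) := by
  simp only [genInf]
  rw [← mul_div_assoc, ← add_div]
  simp only [sum_filter, sum_finset_eq_sum_erase i, mul_sum, ← sum_add_distrib]
  refine congrArg (· / _) (sum_congr rfl fun T hT => ?_)
  have hiT := notMem_of_mem_powerset_erase hT
  simp only [subset_insert_iff_of_notMem hi]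
  rw [coeff_insert hp0 hp1 hiT, coeff_coordAvg p hiT,
    coeff_eq_zero_of_coordDeriv_eq_zero hp0 hp1 (coordDeriv_coordAvg p i f) (mem_insert_self i T),
    coeff_eq_zero_of_coordDeriv_eq_zero hp0 hp1 (coordDeriv_coordDeriv i f) (mem_insert_self i T),
    mul_pow, sq_sqrt_variance hp0.le hp1.le]
  split_ifs <;> ring


/-! ### Hypercontractivity -/

theorem two_point_inequality (hp0 : 0 ≤ p) (hp1 : p ≤ 1) (a b c d : ℝ) :
    p * ((a + 1 / 2 * (1 - p) * b) ^ 2 * (c + 1 / 2 * (1 - p) * d) ^ 2) +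
        (1 - p) * ((a + 1 / 2 * (0 - p) * b) ^ 2 * (c + 1 / 2 * (0 - p) * d) ^ 2) ≤
      a ^ 2 * c ^ 2 + p * (1 - p) *
        (a ^ 2 * d ^ 2 + b ^ 2 * c ^ 2 + b ^ 2 * d ^ 2) := by
  have hq : 0 ≤ p * (1 - p) := mul_nonneg hp0 (sub_nonneg.mpr hp1)
  have hs : (1 - 2 * p) ^ 2 ≤ 1 := by linarith
  have hbd := mul_le_mul_of_nonneg_right hs (sq_nonneg (b * d))
  have hgap : 0 ≤ 3 / 4 * (a * d) ^ 2 + 3 / 4 * (b * c) ^ 2 + (b * d) ^ 2 - a * d * (b * c)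
      - 1 / 4 * (1 - 2 * p) * (a * d * (b * d) + b * c * (b * d))
      - 1 / 16 * (1 - 3 * (p * (1 - p))) * (b * d) ^ 2 := by
    linarith [sq_nonneg (a * d - b * c), sq_nonneg (a * d - (1 - 2 * p) * (b * d)),
      sq_nonneg (b * c - (1 - 2 * p) * (b * d)), sq_nonneg (a * d), sq_nonneg (b * c),
      mul_nonneg hq (sq_nonneg (b * d)), sq_nonneg (b * d)]
  linarith [mul_nonneg hq hgap]

theorem genInf_mul_genInf_split_le (hp0 : 0 < p) (hp1 : p < 1) (hi : i ∉ S)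
    (f g : (Fin n → Bool) → ℝ) :
    genInf p S (coordAvg p i f) * genInf p S (coordAvg p i g) + p * (1 - p) *
        (genInf p S (coordAvg p i f) * genInf p S (coordDeriv i g) +
          genInf p S (coordDeriv i f) * genInf p S (coordAvg p i g) +
          genInf p S (coordDeriv i f) * genInf p S (coordDeriv i g)) ≤
      genInf p S f * genInf p S g +
        p * (1 - p) * (genInf p (insert i S) f * genInf p (insert i S) g) := by
  have h := mul_nonneg (sq_nonneg (p * (1 - p))) (mul_nonneg
    (genInf_nonneg hp0.le hp1.le S (coordDeriv i f))
    (genInf_nonneg hp0.le hp1.le S (coordDeriv i g)))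
  rw [genInf_insert hp0 hp1 hi, genInf_insert hp0 hp1 hi,
    genInf_eq_coordAvg_add_coordDeriv hp0 hp1 hi f, genInf_eq_coordAvg_add_coordDeriv hp0 hp1 hi g]
  linarith

theorem Ep_sq_noise_mul_sq_noise_le_coordAvg_add_coordDeriv (hp0 : 0 < p) (hp1 : p < 1) (i : Fin n)
    (f g : (Fin n → Bool) → ℝ) :
    Ep p (fun x => noise p (1 / 2) f x ^ 2 * noise p (1 / 2) g x ^ 2) ≤
      Ep p (fun x => noise p (1 / 2) (coordAvg p i f) x ^ 2 *
        noise p (1 / 2) (coordAvg p i g) x ^ 2) +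
      p * (1 - p) *
        (Ep p (fun x => noise p (1 / 2) (coordAvg p i f) x ^ 2 *
          noise p (1 / 2) (coordDeriv i g) x ^ 2) +
        Ep p (fun x => noise p (1 / 2) (coordDeriv i f) x ^ 2 *
          noise p (1 / 2) (coordAvg p i g) x ^ 2) +
        Ep p (fun x => noise p (1 / 2) (coordDeriv i f) x ^ 2 *
          noise p (1 / 2) (coordDeriv i g) x ^ 2)) := by
  rw [← Ep_coordAvg p i, ← Ep_add, ← Ep_add, ← Ep_const_mul, ← Ep_add]
  refine Ep_mono hp0.le hp1.le fun x => ?_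
  simp only [coordAvg, noise_update hp0 hp1, if_true, Bool.false_eq_true, if_false]
  exact two_point_inequality hp0.le hp1.le _ _ _ _

theorem Ep_sq_noise_mul_sq_noise_le (hp0 : 0 < p) (hp1 : p < 1)
    (hf : DependsOn f (V : Set (Fin n))) (hg : DependsOn g (V : Set (Fin n))) :
    Ep p (fun x => noise p (1 / 2) f x ^ 2 * noise p (1 / 2) g x ^ 2) ≤
      ∑ S ∈ V.powerset, (p * (1 - p)) ^ S.card * (genInf p S f * genInf p S g) := by
  induction V using Finset.induction_on generalizing f g with
  | empty =>
    rw [coe_empty] at hf hg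
    rw [show f = fun _ => f fun _ => true from funext fun x => hf.empty x _,
      show g = fun _ => g fun _ => true from funext fun x => hg.empty x _]
    simp only [noise_const hp0 hp1, Ep_const, powerset_empty, sum_singleton, card_empty, pow_zero,
      one_mul, genInf_empty hp0 hp1, le_refl]
  | insert i V hi ih =>
    set q := p * (1 - p)
    set f₀ := coordAvg p i f
    set f₁ := coordDeriv i f
    set g₀ := coordAvg p i g
    set g₁ := coordDeriv i g
    have hq : 0 ≤ q := mul_nonneg hp0.le (sub_nonneg.mpr hp1.le)
    have hf₀ : DependsOn f₀ (V : Set (Fin n)) := dependsOn_coordAvg hf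
    have hf₁ : DependsOn f₁ (V : Set (Fin n)) := dependsOn_coordDeriv hf
    have hg₀ : DependsOn g₀ (V : Set (Fin n)) := dependsOn_coordAvg hg
    have hg₁ : DependsOn g₁ (V : Set (Fin n)) := dependsOn_coordDeriv hg
    calc Ep p (fun x => noise p (1 / 2) f x ^ 2 * noise p (1 / 2) g x ^ 2)
        ≤ (∑ S ∈ V.powerset, q ^ S.card * (genInf p S f₀ * genInf p S g₀)) +
            q * ((∑ S ∈ V.powerset, q ^ S.card * (genInf p S f₀ * genInf p S g₁)) +
              (∑ S ∈ V.powerset, q ^ S.card * (genInf p S f₁ * genInf p S g₀)) +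
              ∑ S ∈ V.powerset, q ^ S.card * (genInf p S f₁ * genInf p S g₁)) := by
          refine (Ep_sq_noise_mul_sq_noise_le_coordAvg_add_coordDeriv hp0 hp1 i f g).trans ?_
          gcongr
          exacts [ih hf₀ hg₀, ih hf₀ hg₁, ih hf₁ hg₀, ih hf₁ hg₁]
      _ ≤ ∑ S ∈ (insert i V).powerset, q ^ S.card * (genInf p S f * genInf p S g) := by
          rw [sum_powerset_insert hi, ← sum_add_distrib, ← sum_add_distrib, ← sum_add_distrib,
            mul_sum, ← sum_add_distrib]
          refine sum_le_sum fun S hS => ?_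
          have hiS : i ∉ S := fun h => hi (mem_powerset.mp hS h)
          rw [card_insert_of_notMem hiS, pow_succ]
          linarith [mul_le_mul_of_nonneg_left (genInf_mul_genInf_split_le hp0 hp1 hiS f g)
            (pow_nonneg hq S.card)]

theorem exists_noise_eq_trunc (hp0 : 0 < p) (hp1 : p < 1) (d : ℕ) (g : (Fin n → Bool) → ℝ) :
    ∃ h : (Fin n → Bool) → ℝ, noise p (1 / 2) h = trunc p d g ∧
      (∀ T, d < T.card → coeff p h T = 0) ∧
      ∀ T, coeff p h T ^ 2 ≤ 4 ^ d * coeff p g T ^ 2 := by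
  set c : Finset (Fin n) → ℝ := fun T => if T.card ≤ d then 2 ^ T.card * coeff p g T else 0
  refine ⟨fun x => ∑ T, c T * chi p T x, funext fun x => ?_, fun T hT => ?_, fun T => ?_⟩
  · simp only [noise, trunc, coeff_sum_mul_chi hp0 hp1, sum_filter]
    refine sum_congr rfl fun T _ => ?_
    simp only [c, one_div, inv_pow]
    split_ifs
    · rw [inv_mul_cancel_left₀ (by positivity)]
    · rw [mul_zero, zero_mul]
  · rw [coeff_sum_mul_chi hp0 hp1]
    exact if_neg hT.not_ge
  · rw [coeff_sum_mul_chi hp0 hp1]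
    simp only [c]
    split_ifs with hT
    · rw [mul_pow, ← pow_mul, mul_comm T.card, pow_mul, show (2 : ℝ) ^ 2 = 4 by norm_num]
      gcongr
      norm_num
    · rw [zero_pow two_ne_zero]
      positivity

theorem sum_pow_card_mul_genInf (hp0 : 0 < p) (hp1 : p < 1) (f : (Fin n → Bool) → ℝ) :
    ∑ S, (p * (1 - p)) ^ S.card * genInf p S f = ∑ T, 2 ^ T.card * coeff p f T ^ 2 := by
  have hq : p * (1 - p) ≠ 0 := (mul_pos hp0 (sub_pos.mpr hp1)).ne'
  calc ∑ S, (p * (1 - p)) ^ S.card * genInf p S f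
      = ∑ S, ∑ T with S ⊆ T, coeff p f T ^ 2 :=
        sum_congr rfl fun S _ => mul_div_cancel₀ _ (pow_ne_zero _ hq)
    _ = ∑ T, ∑ _ ∈ T.powerset, coeff p f T ^ 2 :=
        sum_comm' fun _ _ => by simp only [mem_univ, mem_filter, mem_powerset, true_and, and_true]
    _ = ∑ T, 2 ^ T.card * coeff p f T ^ 2 := by
        simp only [sum_const, card_powerset, nsmul_eq_mul, Nat.cast_pow, Nat.cast_ofNat]

theorem genInf_eq_zero_of_lt_card {d : ℕ} (hf : ∀ T, d < T.card → coeff p f T = 0)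
    (hS : d < S.card) : genInf p S f = 0 := by
  rw [genInf, sum_eq_zero, zero_div]
  intro T hT
  rw [hf T (hS.trans_le (card_le_card (mem_filter.mp hT).2)), sq, zero_mul]

theorem genInf_le_mul_genInf (hp0 : 0 ≤ p) (hp1 : p ≤ 1) {a : ℝ}
    (hfg : ∀ T, coeff p f T ^ 2 ≤ a * coeff p g T ^ 2) (S : Finset (Fin n)) :
    genInf p S f ≤ a * genInf p S g := by
  rw [genInf, genInf, ← mul_div_assoc, mul_sum]
  exact div_le_div_of_nonneg_right (sum_le_sum fun T _ => hfg T)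
    (pow_nonneg (mul_nonneg hp0 (sub_nonneg.mpr hp1)) _)

theorem Ep_trunc_pow_four_le (hp0 : 0 < p) (hp1 : p < 1) {d : ℕ} {β : ℝ}
    (hβ : ∀ S : Finset (Fin n), S.card ≤ d → genInf p S g ≤ β) :
    Ep p (fun x => trunc p d g x ^ 4) ≤ 32 ^ d * β * Ep p (fun x => g x ^ 2) := by
  obtain ⟨h, htrunc, hhigh, hcoeff⟩ := exists_noise_eq_trunc hp0 hp1 d g
  have hβ0 : 0 ≤ β := (genInf_nonneg hp0.le hp1.le ∅ g).trans (hβ ∅ (Nat.zero_le d))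
  have hgenInf (S : Finset (Fin n)) : genInf p S h ≤ 4 ^ d * β := by
    rcases le_or_gt S.card d with hS | hS
    · exact (genInf_le_mul_genInf hp0.le hp1.le hcoeff S).trans (by gcongr; exact hβ S hS)
    · rw [genInf_eq_zero_of_lt_card hhigh hS]
      positivity
  have hweight (T : Finset (Fin n)) :
      2 ^ T.card * coeff p h T ^ 2 ≤ 2 ^ d * (4 ^ d * coeff p g T ^ 2) := by
    rcases le_or_gt T.card d with hT | hT
    · gcongr
      exacts [one_le_two, hcoeff T]
    · rw [hhigh T hT, zero_pow two_ne_zero, mul_zero]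
      positivity
  have hh : DependsOn h ((univ : Finset (Fin n)) : Set (Fin n)) := by
    rw [coe_univ]
    exact dependsOn_univ h
  calc Ep p (fun x => trunc p d g x ^ 4)
      = Ep p (fun x => noise p (1 / 2) h x ^ 2 * noise p (1 / 2) h x ^ 2) := by
        simp only [htrunc, ← pow_add]
    _ ≤ ∑ S, (p * (1 - p)) ^ S.card * (genInf p S h * genInf p S h) := by
        simpa only [powerset_univ] using Ep_sq_noise_mul_sq_noise_le hp0 hp1 hh hh
    _ ≤ ∑ S, 4 ^ d * β * ((p * (1 - p)) ^ S.card * genInf p S h) := by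
        refine sum_le_sum fun S _ => ?_
        rw [mul_left_comm (4 ^ d * β)]
        exact mul_le_mul_of_nonneg_left (mul_le_mul_of_nonneg_right (hgenInf S)
          (genInf_nonneg hp0.le hp1.le S h))
          (pow_nonneg (mul_nonneg hp0.le (sub_nonneg.mpr hp1.le)) _)
    _ = 4 ^ d * β * ∑ T, 2 ^ T.card * coeff p h T ^ 2 := by
        rw [← mul_sum, sum_pow_card_mul_genInf hp0 hp1]
    _ ≤ 4 ^ d * β * ∑ T, 2 ^ d * (4 ^ d * coeff p g T ^ 2) :=
        mul_le_mul_of_nonneg_left (sum_le_sum fun T _ => hweight T) (by positivity)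
    _ = 32 ^ d * β * Ep p (fun x => g x ^ 2) := by
        rw [Ep_sq hp0 hp1, ← mul_sum, ← mul_sum, show (32 : ℝ) = 4 * 2 * 4 by norm_num, mul_pow,
          mul_pow]
        ring

/-! ### Level inequality -/

theorem levelWeight_pow_four_le (hp0 : 0 ≤ p) (hp1 : p ≤ 1) (d : ℕ)
    (hg : ∀ x, g x = 0 ∨ g x = 1) :
    levelWeight p d g ^ 4 ≤ Ep p (fun x => g x ^ 2) ^ 3 * Ep p (fun x => trunc p d g x ^ 4) := by
  set h := trunc p d g
  have hgsq (x : Fin n → Bool) : g x ^ 2 = g x :=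
    (sq _).trans (IsIdempotentElem.iff_eq_zero_or_one.mpr (hg x))
  have hweight : levelWeight p d g = Ep p fun x => g x * (g x * h x) := by
    simp only [← mul_assoc, ← sq, hgsq]
    exact (Ep_mul_sum_coeff_mul_chi p g _).symm
  have hweight_sq :
      levelWeight p d g ^ 2 ≤ Ep p (fun x => g x ^ 2) * Ep p fun x => g x * h x ^ 2 := by
    rw [hweight]
    refine (Ep_mul_sq_le hp0 hp1 _ _).trans_eq ?_
    simp only [mul_pow, hgsq]
  calc levelWeight p d g ^ 4 = (levelWeight p d g ^ 2) ^ 2 := by ring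
    _ ≤ (Ep p (fun x => g x ^ 2) * Ep p fun x => g x * h x ^ 2) ^ 2 := by gcongr
    _ = Ep p (fun x => g x ^ 2) ^ 2 * (Ep p fun x => g x * h x ^ 2) ^ 2 := mul_pow _ _ _
    _ ≤ Ep p (fun x => g x ^ 2) ^ 2 *
          (Ep p (fun x => g x ^ 2) * Ep p fun x => (h x ^ 2) ^ 2) := by
        gcongr
        exact Ep_mul_sq_le hp0 hp1 _ _
    _ = Ep p (fun x => g x ^ 2) ^ 3 * Ep p (fun x => h x ^ 4) := by
        simp only [← pow_mul]
        ring

theorem levelWeight_le (hp0 : 0 < p) (hp1 : p < 1) {d : ℕ} {β η : ℝ}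
    (hg : ∀ x, g x = 0 ∨ g x = 1) (hβ : ∀ S : Finset (Fin n), S.card ≤ d → genInf p S g ≤ β)
    (hη : 0 ≤ η) (hβη : 32 ^ d * β ≤ η ^ 4) :
    levelWeight p d g ≤ η * Ep p (fun x => g x ^ 2) := by
  have hEg : 0 ≤ Ep p (fun x => g x ^ 2) := Ep_nonneg hp0.le hp1.le fun x => sq_nonneg _
  refine le_of_pow_le_pow_left₀ four_ne_zero (mul_nonneg hη hEg) ?_
  calc levelWeight p d g ^ 4
      ≤ Ep p (fun x => g x ^ 2) ^ 3 * Ep p (fun x => trunc p d g x ^ 4) :=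
        levelWeight_pow_four_le hp0.le hp1.le d hg
    _ ≤ Ep p (fun x => g x ^ 2) ^ 3 * (η ^ 4 * Ep p (fun x => g x ^ 2)) := by
        gcongr
        exact (Ep_trunc_pow_four_le hp0 hp1 hβ).trans (mul_le_mul_of_nonneg_right hβη hEg)
    _ = (η * Ep p (fun x => g x ^ 2)) ^ 4 := by ring

/-! ### Globalness bounds the generalised influences of derivatives -/

theorem genInf_le_of_abs_le (hp0 : 0 < p) (hp1 : p < 1) {h : (Fin n → Bool) → ℝ}
    (hh : DependsOn h (S : Set (Fin n))ᶜ) (hgh : ∀ x, |g x| ≤ h x) :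
    genInf p S g ≤ 4 ^ S.card * Ep p fun x => h x ^ 2 := by
  induction S using Finset.induction_on generalizing g h with
  | empty =>
    rw [genInf_empty hp0 hp1, card_empty, pow_zero, one_mul]
    exact Ep_mono hp0.le hp1.le fun x => sq_le_sq.mpr ((hgh x).trans (le_abs_self _))
  | insert i S hi ih =>
    have hupdate (x : Fin n → Bool) (b : Bool) : h (update x i b) = h x := hh fun j hj =>
      Function.update_of_ne (ne_of_mem_of_not_mem (mem_insert_self i S) hj).symm _ _
    have hderiv (x : Fin n → Bool) : |coordDeriv i g x| ≤ 2 * h x :=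
      calc |coordDeriv i g x| ≤ |g (update x i true)| + |g (update x i false)| := abs_sub _ _
        _ ≤ h (update x i true) + h (update x i false) := add_le_add (hgh _) (hgh _)
        _ = 2 * h x := by rw [hupdate, hupdate, two_mul]
    have hdep : DependsOn (fun x => 2 * h x) (S : Set (Fin n))ᶜ := fun x y hxy =>
      congrArg (2 * ·) (hh fun j hj => hxy j fun hjS => hj (mem_insert_of_mem hjS))
    rw [genInf_insert hp0 hp1 hi, card_insert_of_notMem hi]
    refine (ih hdep hderiv).trans_eq ?_
    simp only [mul_pow, Ep_const_mul]
    ring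

theorem pow_card_mul_Ep_restrict0_le (hp0 : 0 ≤ p) (hp1 : p ≤ 1) (S : Finset (Fin n))
    (hg : ∀ x, 0 ≤ g x) : (1 - p) ^ S.card * Ep p (restrict0 S g) ≤ Ep p g := by
  induction S using Finset.induction_on generalizing g with
  | empty => exact (one_mul _).le
  | insert i S hi ih =>
    rw [card_insert_of_notMem hi, restrict0_insert, pow_succ', mul_assoc]
    calc (1 - p) * ((1 - p) ^ S.card * Ep p (restrict0 S fun x => g (update x i false)))
        ≤ (1 - p) * Ep p fun x => g (update x i false) :=
          mul_le_mul_of_nonneg_left (ih fun x => hg _) (sub_nonneg.mpr hp1)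
      _ ≤ Ep p (coordAvg p i g) := by
          rw [← Ep_const_mul]
          exact Ep_mono hp0 hp1 fun x => le_add_of_nonneg_left (mul_nonneg hp0 (hg _))
      _ = Ep p g := Ep_coordAvg p i g

theorem pow_card_mul_Ep_restrict1_sub_restrict0_le (hp0 : 0 ≤ p) (hp1 : p ≤ 1) (hf : Mono f)
    (S : Finset (Fin n)) :
    (1 - p) ^ S.card * Ep p (fun x => restrict1 S f x - restrict0 S f x) ≤
      Ep p (restrict1 S f) - Ep p f := by
  have h := pow_card_mul_Ep_restrict0_le hp0 hp1 S fun x => sub_nonneg.mpr (le_restrict1 hf S x)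
  have hrestrict : restrict0 S (fun x => restrict1 S f x - f x) =
      fun x => restrict1 S f x - restrict0 S f x :=
    funext fun x => congrArg (· - restrict0 S f x) (congrFun (restrict0_restrict1 S f) x)
  rwa [hrestrict, Ep_sub p (restrict1 S f) f] at h

theorem Ep_restrict1_sub_restrict0_le (hp0 : 0 ≤ p) (hp1 : p < 1) {d : ℕ} {δ : ℝ} (hf : Mono f)
    (hglobal : IsGlobal p d δ f) (hS : S.card ≤ d) :
    Ep p (fun x => restrict1 S f x - restrict0 S f x) ≤ δ / (1 - p) ^ d := by
  have hq : 0 < 1 - p := sub_pos.mpr hp1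
  have hgap (x : Fin n → Bool) : 0 ≤ restrict1 S f x - restrict0 S f x :=
    sub_nonneg.mpr ((restrict0_le hf S x).trans (le_restrict1 hf S x))
  rw [le_div_iff₀' (pow_pos hq d)]
  calc (1 - p) ^ d * Ep p (fun x => restrict1 S f x - restrict0 S f x)
      ≤ (1 - p) ^ S.card * Ep p (fun x => restrict1 S f x - restrict0 S f x) :=
        mul_le_mul_of_nonneg_right (pow_le_pow_of_le_one hq.le (sub_le_self 1 hp0) hS)
          (Ep_nonneg hp0 hp1.le hgap)
    _ ≤ Ep p (restrict1 S f) - Ep p f :=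
        pow_card_mul_Ep_restrict1_sub_restrict0_le hp0 hp1.le hf S
    _ ≤ δ := sub_le_iff_le_add'.mpr (hglobal S (Nat.cast_le.mpr hS))

theorem genInf_coordDeriv_le (hp0 : 0 < p) (hp1 : p < 1) {d : ℕ} {δ : ℝ}
    (hb : ∀ x, f x = 0 ∨ f x = 1) (hf : Mono f) (hglobal : IsGlobal p (d + 1 : ℕ) δ f) (i : Fin n)
    (hS : S.card ≤ d) :
    genInf p S (coordDeriv i f) ≤ 4 ^ d * (δ / (1 - p) ^ (d + 1)) := by
  set J := insert i S
  set h := fun x => restrict1 J f x - restrict0 J f x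
  have hJ : J.card ≤ d + 1 := (card_insert_le i S).trans (Nat.succ_le_succ hS)
  have hdep : DependsOn h (S : Set (Fin n))ᶜ := fun x y hxy => by
    have hxy' (j : Fin n) (hj : j ∈ (J : Set (Fin n))ᶜ) : x j = y j :=
      hxy j fun hjS => hj (mem_insert_of_mem hjS)
    exact congrArg₂ (· - ·) (dependsOn_restrict1 J f hxy') (dependsOn_restrict0 J f hxy')
  have hderiv (x : Fin n → Bool) : |coordDeriv i f x| ≤ h x := by
    rw [abs_of_nonneg (coordDeriv_nonneg hf i x)]
    exact coordDeriv_le_restrict1_sub_restrict0 hf (mem_insert_self i S) x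
  have hsq (x : Fin n → Bool) : h x ^ 2 = h x :=
    (sq _).trans <| IsIdempotentElem.iff_eq_zero_or_one.mpr <|
      eq_zero_or_one_of_sub_nonneg (hb _) (hb _) ((abs_nonneg _).trans (hderiv x))
  have hEh : 0 ≤ Ep p h := Ep_nonneg hp0.le hp1.le fun x => (abs_nonneg _).trans (hderiv x)
  calc genInf p S (coordDeriv i f) ≤ 4 ^ S.card * Ep p fun x => h x ^ 2 :=
        genInf_le_of_abs_le hp0 hp1 hdep hderiv
    _ = 4 ^ S.card * Ep p h := by simp only [hsq]
    _ ≤ 4 ^ d * Ep p h := by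
        gcongr
        norm_num
    _ ≤ 4 ^ d * (δ / (1 - p) ^ (d + 1)) := by
        gcongr
        exact Ep_restrict1_sub_restrict0_le hp0.le hp1 hf hglobal hJ

/-! ### Influence and variance -/

theorem totalInf_eq_sum_Ep_sq_coordDeriv (p : ℝ) (hb : ∀ x, f x = 0 ∨ f x = 1) :
    totalInf p f = ∑ i, Ep p fun x => coordDeriv i f x ^ 2 := by
  refine sum_congr rfl fun i _ => congrArg _ (funext fun x => ?_)
  have hx := Function.update_eq_self i x
  cases hxi : x i <;> rw [hxi] at hx <;> simp only [coordDeriv, hx, Bool.not_true, Bool.not_false]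
  · rcases hb x with h₀ | h₀ <;> rcases hb (update x i true) with h₁ | h₁ <;> simp [h₀, h₁]
  · rcases hb x with h₁ | h₁ <;> rcases hb (update x i false) with h₀ | h₀ <;> simp [h₀, h₁]

theorem sum_coeff_coordDeriv_sq (hp0 : 0 < p) (hp1 : p < 1) (φ : ℕ → ℝ)
    (f : (Fin n → Bool) → ℝ) :
    p * (1 - p) * ∑ i, ∑ T, φ (T.card + 1) * coeff p (coordDeriv i f) T ^ 2 =
      ∑ T, T.card * (φ T.card * coeff p f T ^ 2) := by
  have hcoord (i : Fin n) :
      p * (1 - p) * ∑ T, φ (T.card + 1) * coeff p (coordDeriv i f) T ^ 2 =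
        ∑ T, if i ∈ T then φ T.card * coeff p f T ^ 2 else 0 := by
    rw [sum_finset_eq_sum_erase i, sum_finset_eq_sum_erase i, mul_sum]
    refine sum_congr rfl fun T hT => ?_
    have hi := notMem_of_mem_powerset_erase hT
    rw [if_neg hi, if_pos (mem_insert_self i T), card_insert_of_notMem hi,
      coeff_eq_zero_of_coordDeriv_eq_zero hp0 hp1 (coordDeriv_coordDeriv i f)
        (mem_insert_self i T),
      coeff_insert hp0 hp1 hi, mul_pow, sq_sqrt_variance hp0.le hp1.le]
    ring
  rw [mul_sum, sum_congr rfl fun i _ => hcoord i, sum_comm]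
  simp only [sum_ite_mem, univ_inter, sum_const, nsmul_eq_mul]

theorem mul_totalInf_eq_sum_card_mul_coeff_sq (hp0 : 0 < p) (hp1 : p < 1)
    (hb : ∀ x, f x = 0 ∨ f x = 1) :
    p * (1 - p) * totalInf p f = ∑ T, T.card * coeff p f T ^ 2 := by
  simpa only [one_mul, ← Ep_sq hp0 hp1, ← totalInf_eq_sum_Ep_sq_coordDeriv p hb] using
    sum_coeff_coordDeriv_sq hp0 hp1 (fun _ => 1) f

theorem mul_sum_levelWeight_coordDeriv (hp0 : 0 < p) (hp1 : p < 1) (d : ℕ)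
    (f : (Fin n → Bool) → ℝ) :
    p * (1 - p) * ∑ i, levelWeight p d (coordDeriv i f) =
      ∑ T : Finset (Fin n) with T.card ≤ d + 1, T.card * coeff p f T ^ 2 := by
  have h := sum_coeff_coordDeriv_sq hp0 hp1 (fun k => if k ≤ d + 1 then 1 else 0) f
  simpa only [levelWeight, add_le_add_iff_right, ite_mul, one_mul, zero_mul, mul_ite, mul_zero,
    ← sum_filter] using h

theorem variance_eq_sum_coeff_sq (hp0 : 0 < p) (hp1 : p < 1) (hb : ∀ x, f x = 0 ∨ f x = 1) :
    Ep p f * (1 - Ep p f) = ∑ T ∈ univ.erase ∅, coeff p f T ^ 2 := by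
  have hsq (x : Fin n → Bool) : f x ^ 2 = f x :=
    (sq _).trans (IsIdempotentElem.iff_eq_zero_or_one.mpr (hb x))
  have hparseval := Ep_sq hp0 hp1 f
  rw [← add_sum_erase univ _ (mem_univ ∅), coeff_empty] at hparseval
  simp only [hsq] at hparseval
  linarith

theorem variance_le_mul_totalInf (hp0 : 0 < p) (hp1 : p < 1) (hb : ∀ x, f x = 0 ∨ f x = 1) :
    Ep p f * (1 - Ep p f) ≤ p * (1 - p) * totalInf p f := by
  rw [variance_eq_sum_coeff_sq hp0 hp1 hb, mul_totalInf_eq_sum_card_mul_coeff_sq hp0 hp1 hb,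
    ← add_sum_erase univ _ (mem_univ ∅), card_empty, Nat.cast_zero, zero_mul, zero_add]
  refine sum_le_sum fun T hT => le_mul_of_one_le_left (sq_nonneg _) ?_
  exact_mod_cast card_pos.mpr (nonempty_iff_ne_empty.mpr (ne_of_mem_erase hT))

theorem variance_le_sum_levelWeight_add (hp0 : 0 < p) (hp1 : p < 1)
    (hb : ∀ x, f x = 0 ∨ f x = 1) (d : ℕ) :
    Ep p f * (1 - Ep p f) ≤ p * (1 - p) * ∑ i, levelWeight p d (coordDeriv i f) +
      p * (1 - p) * totalInf p f / (d + 2) := by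
  rw [variance_eq_sum_coeff_sq hp0 hp1 hb, mul_totalInf_eq_sum_card_mul_coeff_sq hp0 hp1 hb,
    mul_sum_levelWeight_coordDeriv hp0 hp1, sum_filter, sum_div, ← sum_add_distrib,
    ← add_sum_erase univ _ (mem_univ ∅)]
  simp only [card_empty, Nat.cast_zero, zero_mul, zero_div, ite_self, zero_add, Nat.zero_le]
  refine sum_le_sum fun T hT => ?_
  split_ifs with hd
  · have hT1 : (1 : ℝ) ≤ T.card := by
      exact_mod_cast card_pos.mpr (nonempty_iff_ne_empty.mpr (ne_of_mem_erase hT))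
    exact (le_mul_of_one_le_left (sq_nonneg _) hT1).trans (le_add_of_nonneg_right (by positivity))
  · have hT2 : (d : ℝ) + 2 ≤ T.card := by exact_mod_cast Nat.lt_of_not_le hd
    rw [zero_add, le_div_iff₀ (by positivity), mul_comm]
    exact mul_le_mul_of_nonneg_right hT2 (sq_nonneg _)

theorem variance_le_of_isGlobal (hp0 : 0 < p) (hp1 : p < 1) {d : ℕ} {δ η : ℝ}
    (hb : ∀ x, f x = 0 ∨ f x = 1) (hf : Mono f) (hglobal : IsGlobal p (d + 1 : ℕ) δ f)
    (hη : 0 ≤ η) (hδη : 32 ^ d * (4 ^ d * (δ / (1 - p) ^ (d + 1))) ≤ η ^ 4) :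
    Ep p f * (1 - Ep p f) ≤ (η + 1 / (d + 2)) * (p * (1 - p) * totalInf p f) := by
  have hlevel (i : Fin n) :
      levelWeight p d (coordDeriv i f) ≤ η * Ep p fun x => coordDeriv i f x ^ 2 :=
    levelWeight_le hp0 hp1
      (fun x => eq_zero_or_one_of_sub_nonneg (hb _) (hb _) (coordDeriv_nonneg hf i x))
      (fun S hS => genInf_coordDeriv_le hp0 hp1 hb hf hglobal i hS) hη hδη
  calc Ep p f * (1 - Ep p f)
      ≤ p * (1 - p) * ∑ i, levelWeight p d (coordDeriv i f) +
          p * (1 - p) * totalInf p f / (d + 2) := variance_le_sum_levelWeight_add hp0 hp1 hb d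
    _ ≤ p * (1 - p) * (η * totalInf p f) + p * (1 - p) * totalInf p f / (d + 2) := by
        rw [totalInf_eq_sum_Ep_sq_coordDeriv p hb, mul_sum _ _ η]
        exact add_le_add_left (mul_le_mul_of_nonneg_left (sum_le_sum fun i _ => hlevel i)
          (mul_nonneg hp0.le (sub_nonneg.mpr hp1.le))) _
    _ = (η + 1 / (d + 2)) * (p * (1 - p) * totalInf p f) := by ring

/-! ### Choice of the degree and conclusion -/

theorem pow_128_le_exp (d : ℕ) : (128 : ℝ) ^ d ≤ Real.exp (7 * d) := by
  have h2 : (2 : ℝ) ≤ Real.exp 1 := by linarith [Real.add_one_le_exp (1 : ℝ)]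
  calc (128 : ℝ) ^ d = (2 ^ 7) ^ d := by norm_num
    _ ≤ (Real.exp 1 ^ 7) ^ d := by gcongr
    _ = Real.exp (7 * d) := by rw [← pow_mul, ← Real.exp_nat_mul, mul_one]; norm_num

theorem pow_le_exp_mul (x : ℝ) (hx : 0 ≤ x) (k : ℕ) : x ^ k ≤ Real.exp (k * x) := by
  rw [Real.exp_nat_mul]
  gcongr
  linarith [Real.add_one_le_exp x]

theorem exists_degree_pow_mul_exp_le (hp0 : 0 ≤ p) (hp1 : p < 1) {y : ℝ}
    (hy : 1 / 2 ≤ (1 - p) * y) :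
    ∃ d : ℕ, ((d + 1 : ℕ) : ℝ) ≤ 66 * y ∧ 4 * ((1 - p) * y) ≤ d + 2 ∧
      32 ^ d * (4 ^ d * (Real.exp (-(66 * y)) / (1 - p) ^ (d + 1))) ≤
        (1 / (8 * ((1 - p) * y))) ^ 4 := by
  have hq : 0 < 1 - p := sub_pos.mpr hp1
  set t := (1 - p) * y
  have hyt : y = t / (1 - p) := (mul_div_cancel_left₀ y hq.ne').symm
  have hty : t ≤ y := hyt ▸ le_div_self (by linarith) hq (sub_le_self 1 hp0)
  have hd_le : (⌊4 * t⌋₊ : ℝ) ≤ 4 * t := Nat.floor_le (by linarith)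
  have hlt_d : 4 * t < ⌊4 * t⌋₊ + 1 := Nat.lt_floor_add_one _
  set d := ⌊4 * t⌋₊
  refine ⟨d, by push_cast; linarith, by linarith, ?_⟩
  have h128 : (128 : ℝ) ^ d ≤ Real.exp (28 * y) :=
    (pow_128_le_exp d).trans (Real.exp_le_exp.mpr (by linarith))
  have hinv : (1 / (1 - p)) ^ (d + 1) ≤ Real.exp (6 * y) := by
    refine (pow_le_exp_mul _ (by positivity) _).trans (Real.exp_le_exp.mpr ?_)
    rw [hyt, mul_one_div, ← mul_div_assoc]
    gcongr
    push_cast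
    linarith
  have ht4 : (8 * t) ^ 4 ≤ Real.exp (32 * y) :=
    (pow_le_exp_mul _ (by linarith) 4).trans (Real.exp_le_exp.mpr (by push_cast; linarith))
  rw [one_div_pow, le_div_iff₀ (by positivity)]
  -- This is where `66 = 28 + 6 + 32` comes from.
  calc 32 ^ d * (4 ^ d * (Real.exp (-(66 * y)) / (1 - p) ^ (d + 1))) * (8 * t) ^ 4
      = 128 ^ d * (1 / (1 - p)) ^ (d + 1) * (8 * t) ^ 4 * Real.exp (-(66 * y)) := by
        rw [show (128 : ℝ) = 32 * 4 by norm_num, mul_pow 32, one_div_pow]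
        ring
    _ ≤ Real.exp (28 * y) * Real.exp (6 * y) * Real.exp (32 * y) * Real.exp (-(66 * y)) := by
        gcongr
    _ = 1 := by
        rw [← Real.exp_add, ← Real.exp_add, ← Real.exp_add, Real.exp_eq_one_iff]
        ring

theorem statement13_general {p K ε : ℝ} {f : (Fin n → Bool) → ℝ} (hp0 : 0 < p) (hp1 : p < 1)
    (hε : 0 < ε) (hb : ∀ x, f x = 0 ∨ f x = 1) (hf : Mono f) (h1 : ε ≤ Ep p f)
    (h2 : Ep p f ≤ 1 - ε) (hI : totalInf p f ≤ K / p) :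
    ∃ J : Finset (Fin n), (J.card : ℝ) ≤ 66 / ε * K ∧
      Ep p f + Real.exp (-(66 / ε * K)) ≤ Ep p (restrict1 J f) := by
  set t := (1 - p) * (K / ε) with ht
  rw [show 66 / ε * K = 66 * (K / ε) by ring]
  have hvar : ε / 2 ≤ Ep p f * (1 - Ep p f) := by
    nlinarith [mul_nonneg (sub_nonneg.mpr h1) (sub_nonneg.mpr h2)]
  have hinf : p * (1 - p) * totalInf p f ≤ ε * t := by
    calc p * (1 - p) * totalInf p f ≤ p * (1 - p) * (K / p) :=
          mul_le_mul_of_nonneg_left hI (mul_nonneg hp0.le (sub_nonneg.mpr hp1.le))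
      _ = ε * t := by rw [ht]; field_simp
  have ht_ge : 1 / 2 ≤ t := by
    have := hvar.trans ((variance_le_mul_totalInf hp0 hp1 hb).trans hinf)
    exact le_of_mul_le_mul_left (by linarith) hε
  obtain ⟨d, hdJ, hdt, hδη⟩ := exists_degree_pow_mul_exp_le hp0.le hp1 ht_ge
  by_contra! hJ
  have hglobal : IsGlobal p (d + 1 : ℕ) (Real.exp (-(66 * (K / ε)))) f :=
    fun J hJd => (hJ J (hJd.trans hdJ)).le
  have hsmall : Ep p f * (1 - Ep p f) ≤ 3 / 8 * ε :=
    calc Ep p f * (1 - Ep p f) ≤ (1 / (8 * t) + 1 / (d + 2)) * (p * (1 - p) * totalInf p f) :=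
          variance_le_of_isGlobal hp0 hp1 hb hf hglobal (by positivity) hδη
      _ ≤ (1 / (8 * t) + 1 / (d + 2)) * (ε * t) := by gcongr
      _ ≤ (1 / (8 * t) + 1 / (4 * t)) * (ε * t) := by gcongr
      _ = 3 / 8 * ε := by field_simp; norm_num
  linarith

/-- sharp form of Bourgain's theorem (Theorem 1.4). -/
theorem statement13 :
    ∀ ε : ℝ, 0 < ε → ε < 1/2 →
      ∃ C : ℝ, 1 ≤ C ∧
        ∀ (n : ℕ) (p K : ℝ) (f : (Fin n → Bool) → ℝ),
          0 < p → p ≤ 1/2 → 1 ≤ K → (∀ x, f x = 0 ∨ f x = 1) → Mono f →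
          ε ≤ Ep p f → Ep p f ≤ 1 - ε → totalInf p f ≤ K / p →
          ∃ J : Finset (Fin n), (J.card : ℝ) ≤ C * K ∧
            Ep p f + Real.exp (-(C * K)) ≤ Ep p (restrict1 J f) :=
  fun ε hε hε2 => ⟨66 / ε, (one_le_div hε).mpr (by linarith), fun _ _ _ _ hp0 hp2 _ =>
    statement13_general hp0 (by linarith) hε⟩

end GlobalHC
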